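/- arXiv:2408.13125 — 2 statements merged into one kernel-verified Lean document; each statement's English description precedes it below -/
import Mathlib

section
/- Let d, a, b, c be real numbers, not all zero, let n = d² + a² + b² + c², let Q be the matrix quaternion and Q* the anti-quaternion associated with (d,a,b,c), and set R = (1/n)·Q*·Q. Then R is a rotation of E⁴: R·Rᵀ = I₄ and det R = 1; moreover R fixes the axis vector (0, a, b, c), i.e. R·(0,a,b,c)ᵀ = (0,a,b,c)ᵀ. -/
/-- De Casteljau's matrix quaternion associated with `(d,a,b,c) ∈ ℝ⁴`. -/
def matQ (d a b c : ℝ) : Matrix (Fin 4) (Fin 4) ℝ :=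
  !![d, -a, -b, -c;
     a,  d, -c,  b;
     b,  c,  d, -a;
     c, -b,  a,  d]

/-- De Casteljau's anti-quaternion associated with `(d,a,b,c) ∈ ℝ⁴`. -/
def antiQ (d a b c : ℝ) : Matrix (Fin 4) (Fin 4) ℝ :=
  !![ d,  a,  b,  c;
     -a,  d, -c,  b;
     -b,  c,  d, -a;
     -c, -b,  a,  d]

theorem matQ_mul_transpose (d a b c : ℝ) :
    matQ d a b c * (matQ d a b c).transpose = (d ^ 2 + a ^ 2 + b ^ 2 + c ^ 2) • 1 := by
  ext i j
  fin_cases i <;> fin_cases j <;>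
    simp [matQ, Matrix.mul_apply, Fin.sum_univ_four] <;> ring

theorem antiQ_mul_transpose (d a b c : ℝ) :
    antiQ d a b c * (antiQ d a b c).transpose = (d ^ 2 + a ^ 2 + b ^ 2 + c ^ 2) • 1 := by
  ext i j
  fin_cases i <;> fin_cases j <;>
    simp [antiQ, Matrix.mul_apply, Fin.sum_univ_four] <;> ring

theorem matQ_det (d a b c : ℝ) :
    (matQ d a b c).det = (d ^ 2 + a ^ 2 + b ^ 2 + c ^ 2) ^ 2 := by
  simp [matQ, Matrix.det_succ_row_zero, Fin.sum_univ_succ, Fin.succAbove]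
  ring

theorem antiQ_det (d a b c : ℝ) :
    (antiQ d a b c).det = (d ^ 2 + a ^ 2 + b ^ 2 + c ^ 2) ^ 2 := by
  simp [antiQ, Matrix.det_succ_row_zero, Fin.sum_univ_succ, Fin.succAbove]
  ring

theorem anti_mat_mulVec (d a b c : ℝ) :
    (antiQ d a b c).mulVec ((matQ d a b c).mulVec ![0, a, b, c]) =
      (d ^ 2 + a ^ 2 + b ^ 2 + c ^ 2) • ![0, a, b, c] := by
  ext i
  fin_cases i <;>
    simp [antiQ, matQ, Matrix.mulVec, dotProduct, Fin.sum_univ_four] <;> ring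

/-- De Casteljau's rotation theorem: the normalised product `R = (1/n)·Q*·Q` of a
matrix quaternion with its own anti-quaternion is a rotation of `E⁴`
(`R·Rᵀ = I₄`, `det R = 1`) fixing the axis vector `(0, a, b, c)`. -/
theorem quaternion_rotation (d a b c : ℝ)
    (hne : ¬(d = 0 ∧ a = 0 ∧ b = 0 ∧ c = 0))
    (n : ℝ) (hn : n = d ^ 2 + a ^ 2 + b ^ 2 + c ^ 2)
    (R : Matrix (Fin 4) (Fin 4) ℝ) (hR : R = (1 / n) • (antiQ d a b c * matQ d a b c)) :
    R * R.transpose = (1 : Matrix (Fin 4) (Fin 4) ℝ) ∧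
    R.det = 1 ∧
    R.mulVec ![0, a, b, c] = ![0, a, b, c] := by
  have hn0 : n ≠ 0 := by
    intro h0
    apply hne
    rw [hn] at h0
    refine ⟨?_, ?_, ?_, ?_⟩ <;>
      nlinarith [sq_nonneg d, sq_nonneg a, sq_nonneg b, sq_nonneg c]
  subst hR
  refine ⟨?_, ?_, ?_⟩
  · rw [Matrix.transpose_smul, Matrix.transpose_mul, Matrix.smul_mul, Matrix.mul_smul,
      Matrix.mul_assoc, ← Matrix.mul_assoc (matQ d a b c), matQ_mul_transpose, ← hn,
      Matrix.smul_mul, Matrix.one_mul, Matrix.mul_smul, antiQ_mul_transpose, ← hn,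
      smul_smul, smul_smul, smul_smul]
    have : 1 / n * (1 / n) * n * n = 1 := by field_simp
    rw [this, one_smul]
  · rw [Matrix.det_smul, Matrix.det_mul, matQ_det, antiQ_det, ← hn, Fintype.card_fin]
    field_simp
  · rw [Matrix.smul_mulVec, ← Matrix.mulVec_mulVec, anti_mat_mulVec, ← hn, smul_smul,
      one_div_mul_cancel hn0, one_smul]
end

section
/- Let d, a, b, c be real numbers with a² + b² + c² = 1, let n = d² + 1, and let R = (1/n)·Q*·Q where Q, Q* are the matrix quaternion and anti-quaternion associated with (d,a,b,c). Let (α, β, γ) be a unit vector orthogonal to (a,b,c), i.e. α² + β² + γ² = 1 and aα + bβ + cγ = 0. Then R·(0,α,β,γ)ᵀ = cos φ · (0,α,β,γ)ᵀ + sin φ · (0, bγ−cβ, cα−aγ, aβ−bα)ᵀ, where cos φ = (d² − 1)/(d² + 1) and sin φ = 2d/(d² + 1); that is, R rotates the plane orthogonal to the axis (a,b,c) by the angle φ. -/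
/-- The rotation angle of de Casteljau's quaternion rotation: for a unit axis
`(a,b,c)` and `R = (1/(d²+1))·Q*·Q`, the rotation `R` maps a unit vector
`(0,α,β,γ)` orthogonal to the axis to
`cos φ · (0,α,β,γ) + sin φ · (0, (a,b,c) × (α,β,γ))`, with
`cos φ = (d²−1)/(d²+1)` and `sin φ = 2d/(d²+1)`. -/
theorem quaternion_rotation_angle (d a b c : ℝ)
    (haxis : a ^ 2 + b ^ 2 + c ^ 2 = 1)
    (n : ℝ) (hn : n = d ^ 2 + 1)
    (R : Matrix (Fin 4) (Fin 4) ℝ) (hR : R = (1 / n) • (antiQ d a b c * matQ d a b c))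
    (α β γ : ℝ) (hunit : α ^ 2 + β ^ 2 + γ ^ 2 = 1)
    (horth : a * α + b * β + c * γ = 0) :
    R.mulVec ![0, α, β, γ] =
      ((d ^ 2 - 1) / (d ^ 2 + 1)) • ![0, α, β, γ] +
      (2 * d / (d ^ 2 + 1)) • ![0, b * γ - c * β, c * α - a * γ, a * β - b * α] := by
  have hpos : d ^ 2 + 1 ≠ 0 := by positivity
  subst hn hR
  rw [Matrix.smul_mulVec, ← Matrix.mulVec_mulVec]
  ext i
  fin_cases i <;>
    simp [matQ, antiQ, Matrix.mulVec, dotProduct, Fin.sum_univ_four] <;>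
    field_simp
  · right; ring
  · linear_combination (-α) * haxis + 2 * a * horth
  · linear_combination (-β) * haxis + 2 * b * horth
  · linear_combination (-γ) * haxis + 2 * c * horth
end
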